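/- Let S be a numerical semigroup and let I ∈ 𝔑(S), I ≠ ℕ, be such that I has a unique cover in the poset (𝔑(S), ⊆). Then for every J ∈ 𝔑(S) \ {I} with I ⪯ J, one has I ∪ {F(I)} ⪯ J, where F(I) = max(ℕ \ I). -/

import Mathlib

open Pointwise

/-- A numerical semigroup: an additive submonoid of `ℕ` with finite complement. -/
def IsNumericalSemigroup (S : Set ℕ) : Prop :=
  0 ∈ S ∧ (∀ a ∈ S, ∀ b ∈ S, a + b ∈ S) ∧ Sᶜ.Finite

/-- A normalized (relative) ideal of `S`: a subset of `ℕ` with `min I = 0`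
(equivalently `0 ∈ I`) satisfying `I + S ⊆ I`. -/
def IsNormalizedIdeal (S I : Set ℕ) : Prop :=
  0 ∈ I ∧ ∀ i ∈ I, ∀ s ∈ S, i + s ∈ I

/-- The set `𝔑(S)` of normalized ideals of `S`. -/
def NI (S : Set ℕ) : Set (Set ℕ) := {I : Set ℕ | IsNormalizedIdeal S I}

/-- The multiplicity of `S`: its least nonzero element. -/
noncomputable def multNS (S : Set ℕ) : ℕ := sInf {n : ℕ | n ∈ S ∧ n ≠ 0}

/-- The Frobenius number of `S` (or of an ideal): the largest natural number not in `S`. -/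
noncomputable def frobNS (S : Set ℕ) : ℕ := sSup Sᶜ

/-- A minimal generator of `S`: a nonzero element of `S` that is not the sum
of two nonzero elements of `S`. -/
def IsMinimalGenerator (S : Set ℕ) (a : ℕ) : Prop :=
  a ∈ S ∧ a ≠ 0 ∧ ¬ ∃ b ∈ S, ∃ c ∈ S, b ≠ 0 ∧ c ≠ 0 ∧ a = b + c

/-- A minimal generator of an ideal `I` of a numerical semigroup `T`:
an element `x ∈ I` with `x ≠ y + t` for every `y ∈ I` and nonzero `t ∈ T`. -/
def IsMinGenOfIdeal (T I : Set ℕ) (x : ℕ) : Prop :=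
  x ∈ I ∧ ∀ y ∈ I, ∀ t ∈ T, t ≠ 0 → x ≠ y + t

/-- The order `⪯` on normalized ideals: `I ⪯ J` iff `I + K = J` for some `K ∈ 𝔑(S)`. -/
def Preceq (S I J : Set ℕ) : Prop :=
  ∃ K : Set ℕ, IsNormalizedIdeal S K ∧ I + K = J

/-- `M` is the supremum of `{I, J}` in `(𝔑(S), ⪯)`. -/
def IsSupNI (S I J M : Set ℕ) : Prop :=
  IsNormalizedIdeal S M ∧ Preceq S I M ∧ Preceq S J M ∧
    ∀ L : Set ℕ, IsNormalizedIdeal S L → Preceq S I L → Preceq S J L → Preceq S M L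

/-- `M` is the infimum of `{I, J}` in `(𝔑(S), ⪯)`. -/
def IsInfNI (S I J M : Set ℕ) : Prop :=
  IsNormalizedIdeal S M ∧ Preceq S M I ∧ Preceq S M J ∧
    ∀ L : Set ℕ, IsNormalizedIdeal S L → Preceq S L I → Preceq S L J → Preceq S L M

/-- `(𝔑(S), ⪯)` is a lattice: every pair of normalized ideals has a supremum
and an infimum with respect to `⪯`. -/
def NILattice (S : Set ℕ) : Prop :=
  ∀ I J : Set ℕ, IsNormalizedIdeal S I → IsNormalizedIdeal S J →
    (∃ M : Set ℕ, IsSupNI S I J M) ∧ (∃ M : Set ℕ, IsInfNI S I J M)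

/-- The ordinary numerical semigroup `H_m = {0} ∪ {n : n ≥ m}`. -/
def ordinaryNS (m : ℕ) : Set ℕ := {0} ∪ {n : ℕ | m ≤ n}

/-- `I ∈ 𝔑(S) \ {S}` is `+`-irreducible if `I = J + K` with `J, K ∈ 𝔑(S)`
implies `I = J` or `I = K`. -/
def PlusIrreducible (S I : Set ℕ) : Prop :=
  IsNormalizedIdeal S I ∧ I ≠ S ∧
    ∀ J K : Set ℕ, IsNormalizedIdeal S J → IsNormalizedIdeal S K → I = J + K → I = J ∨ I = K

/-- Lemma: if `I ∈ 𝔑(S)`, `I ≠ ℕ`, has a unique cover in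
`(𝔑(S), ⊆)`, then for every `J ∈ 𝔑(S) \ {I}` with `I ⪯ J` one has
`I ∪ {F(I)} ⪯ J`. -/
theorem unique_cover_preceq (S : Set ℕ) (hS : IsNumericalSemigroup S)
    (I : Set ℕ) (hI : IsNormalizedIdeal S I) (hne : I ≠ Set.univ)
    (hcov : ∃! J : Set ℕ, IsNormalizedIdeal S J ∧ I ⊂ J ∧
      ¬ ∃ C : Set ℕ, IsNormalizedIdeal S C ∧ I ⊂ C ∧ C ⊂ J) :
    ∀ J : Set ℕ, IsNormalizedIdeal S J → J ≠ I → Preceq S I J →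
      Preceq S (I ∪ {frobNS I}) J := by
  have hcI : Iᶜ.Finite := by
    refine hS.2.2.subset ?_
    intro x hx hxS
    exact hx (by simpa using hI.2 0 hI.1 x hxS)
  have hbdd : BddAbove Iᶜ := hcI.bddAbove
  have hneI : Iᶜ.Nonempty := Set.nonempty_compl.mpr hne
  have hF : frobNS I ∉ I := Nat.sSup_mem hneI hbdd
  have hgt : ∀ n, frobNS I < n → n ∈ I := by
    intro n hn
    by_contra h
    have : n ≤ frobNS I := le_csSup hbdd h
    omega
  have key : ∀ x, x ∉ I → (∀ s ∈ S, s ≠ 0 → x + s ∈ I) →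
      (IsNormalizedIdeal S (I ∪ {x}) ∧ I ⊂ I ∪ {x} ∧
      ¬ ∃ C : Set ℕ, IsNormalizedIdeal S C ∧ I ⊂ C ∧ C ⊂ I ∪ {x}) := by
    intro x hx hs
    refine ⟨⟨Or.inl hI.1, ?_⟩, ?_, ?_⟩
    · rintro i (hi | hi) s hsS
      · exact Or.inl (hI.2 i hi s hsS)
      · have hi' : i = x := hi
        subst hi'
        by_cases h0 : s = 0
        · right; simp [h0]
        · exact Or.inl (hs s hsS h0)
    · exact ⟨Set.subset_union_left, fun h => hx (h (Or.inr rfl))⟩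
    · rintro ⟨C, -, h1, h2⟩
      obtain ⟨y, hyC, hyI⟩ := Set.exists_of_ssubset h1
      have hyx : y = x := (h2.1 hyC).resolve_left hyI
      subst hyx
      apply h2.2
      rintro z (hz | hz)
      · exact h1.1 hz
      · have hz' : z = y := hz
        exact hz' ▸ hyC
  intro J hJ hJI hIJ
  obtain ⟨K, hK, hKJ⟩ := hIJ
  have hsub : I ⊆ J := by
    intro i hi
    rw [← hKJ]
    exact ⟨i, hi, 0, hK.1, by simp⟩
  have hFJ : frobNS I ∈ J := by
    have hne2 : (J \ I).Nonempty := by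
      by_contra h
      rw [Set.not_nonempty_iff_eq_empty, Set.diff_eq_empty] at h
      exact hJI (Set.Subset.antisymm h hsub)
    have hb2 : BddAbove (J \ I) := hbdd.mono (fun x hx => hx.2)
    obtain ⟨hxJ, hxI⟩ := Nat.sSup_mem hne2 hb2
    have h1 := key _ hxI (by
      intro s hs h0
      by_contra h
      have := le_csSup hb2 (show sSup (J \ I) + s ∈ J \ I from ⟨hJ.2 _ hxJ s hs, h⟩)
      omega)
    have h2 := key _ hF (fun s _ h0 => hgt _ (by omega))
    have h3 := hcov.unique h1 h2
    have h4 : frobNS I ∈ I ∪ {sSup (J \ I)} := by rw [h3]; exact Or.inr rfl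
    have h5 : frobNS I = sSup (J \ I) := h4.resolve_left hF
    rw [h5]; exact hxJ
  refine ⟨K, hK, ?_⟩
  apply Set.Subset.antisymm
  · rintro _ ⟨i, hi | hi, k, hk, rfl⟩
    · rw [← hKJ]; exact ⟨i, hi, k, hk, rfl⟩
    · have hi' : i = frobNS I := hi
      subst hi'
      by_cases h0 : k = 0
      · simpa [h0] using hFJ
      · exact hsub (hgt _ (by show frobNS I < frobNS I + k; omega))
  · rw [← hKJ]
    exact Set.add_subset_add_right Set.subset_union_left
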